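/- arXiv:2010.07537 — 2 statements merged into one kernel-verified Lean document; each statement's English description precedes it below -/
import Mathlib

section
/- For every N ∈ ℕ there exists an algorithm (a computable function with values in Bool, with respect to a standard encoding of the inputs) that, given a finite subset X ⊆ ℤ^N and an element b ∈ ℤ^N, decides whether there exists an element v ∈ Span_ℤ(X) + b whose N entries generate ℤ, i.e., whose entries have greatest common divisor 1. -/
namespace Stmt11

theorem primrec_toNat : Primrec Int.toNat := by
  have h : Primrec (fun k : ℕ => if k % 2 = 0 then k / 2 else 0) :=
    Primrec.ite (Primrec.eq.comp (Primrec.nat_mod.comp Primrec.id (Primrec.const 2)) (Primrec.const 0))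
      (Primrec.nat_div.comp Primrec.id (Primrec.const 2)) (Primrec.const 0)
  refine (h.comp Primrec.encode).of_eq ?_
  rintro (n | n)
  · have : Encodable.encode (Int.ofNat n) = 2 * n := rfl
    rw [this]; simp
  · have : Encodable.encode (Int.negSucc n) = 2 * n + 1 := rfl
    rw [this]; simp

theorem primrec_negToNat : Primrec (fun z : ℤ => (-z).toNat) := by
  have h : Primrec (fun k : ℕ => if k % 2 = 0 then 0 else k / 2 + 1) :=
    Primrec.ite (Primrec.eq.comp (Primrec.nat_mod.comp Primrec.id (Primrec.const 2)) (Primrec.const 0))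
      (Primrec.const 0) (Primrec.succ.comp (Primrec.nat_div.comp Primrec.id (Primrec.const 2)))
  refine (h.comp Primrec.encode).of_eq ?_
  rintro (n | n)
  · have : Encodable.encode (Int.ofNat n) = 2 * n := rfl
    rw [this]; simp
  · have : Encodable.encode (Int.negSucc n) = 2 * n + 1 := rfl
    rw [this, Int.neg_negSucc]
    rw [if_neg (by omega)]
    have : (2 * n + 1) / 2 = n := by omega
    rw [this]; rfl

theorem primrec_natAbs : Primrec Int.natAbs :=
  (Primrec.nat_add.comp primrec_toNat primrec_negToNat).of_eq (fun z => by omega)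

/-- The gcd as a bounded search. -/
def eGcd (a b : ℕ) : ℕ := Nat.findGreatest (fun d => b % d = 0 ∧ a % d = 0) (a + b)

theorem eGcd_eq (a b : ℕ) : eGcd a b = Nat.gcd a b := by
  unfold eGcd
  rcases Nat.eq_zero_or_pos (a + b) with h | h
  · obtain ⟨rfl, rfl⟩ : a = 0 ∧ b = 0 := by omega
    simp
  · rw [Nat.findGreatest_eq_iff]
    refine ⟨?_, fun _ => ⟨Nat.mod_eq_zero_of_dvd (Nat.gcd_dvd_right _ _),
      Nat.mod_eq_zero_of_dvd (Nat.gcd_dvd_left _ _)⟩, ?_⟩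
    · exact Nat.le_of_dvd h (Nat.dvd_add (Nat.gcd_dvd_left _ _) (Nat.gcd_dvd_right _ _))
    · rintro n hn - ⟨h1, h2⟩
      have := Nat.dvd_gcd (Nat.dvd_of_mod_eq_zero h2) (Nat.dvd_of_mod_eq_zero h1)
      have h3 : 0 < Nat.gcd a b := by
        rw [Nat.pos_iff_ne_zero, Ne, Nat.gcd_eq_zero_iff]; omega
      have := Nat.le_of_dvd h3 this
      omega

theorem primrec_gcd : Primrec₂ Nat.gcd := by
  have h : Primrec (fun p : ℕ × ℕ => eGcd p.1 p.2) := by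
    unfold eGcd
    refine Primrec.nat_findGreatest (Primrec.nat_add.comp Primrec.fst Primrec.snd) ?_
    refine PrimrecPred.and ?_ ?_
    · exact Primrec.eq.comp (Primrec.nat_mod.comp (Primrec.snd.comp Primrec.fst) Primrec.snd) (Primrec.const 0)
    · exact Primrec.eq.comp (Primrec.nat_mod.comp (Primrec.fst.comp Primrec.fst) Primrec.snd) (Primrec.const 0)
  exact h.of_eq (fun p => eGcd_eq _ _)

def gcdL (l : List ℤ) : ℕ := l.foldr (fun z g => Nat.gcd z.natAbs g) 0

theorem dvd_gcdL (d : ℕ) (l : List ℤ) : d ∣ gcdL l ↔ ∀ z ∈ l, (d : ℤ) ∣ z := by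
  induction l with
  | nil => simp [gcdL]
  | cons a l ih =>
    have : gcdL (a :: l) = Nat.gcd a.natAbs (gcdL l) := rfl
    rw [this, Nat.dvd_gcd_iff, ih]
    simp [Int.natCast_dvd]

theorem primrec_gcdL : Primrec gcdL := by
  unfold gcdL
  refine Primrec.list_foldr (α := List ℤ) (β := ℤ) (σ := ℕ) (f := fun l => l) (g := fun _ => 0)
    (h := fun _ p => Nat.gcd p.1.natAbs p.2) Primrec.id (Primrec.const 0) ?_
  exact primrec_gcd.comp (primrec_natAbs.comp (Primrec.fst.comp Primrec.snd)) (Primrec.snd.comp Primrec.snd)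

variable {N : ℕ}

theorem primrec_toList : Primrec (fun v : Fin N → ℤ => List.ofFn v) :=
  Primrec.list_ofFn (f := fun i (v : Fin N → ℤ) => v i)
    (fun i => Primrec.fin_app.comp Primrec.id (Primrec.const i))

def cX (X : List (Fin N → ℤ)) : ℕ := gcdL (X.flatMap (fun v => List.ofFn v))
def cb (b : Fin N → ℤ) : ℕ := gcdL (List.ofFn b)

theorem dvd_cX (d : ℕ) (X : List (Fin N → ℤ)) : d ∣ cX X ↔ ∀ x ∈ X, ∀ i, (d : ℤ) ∣ x i := by
  rw [cX, dvd_gcdL]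
  simp only [List.mem_flatMap, List.mem_ofFn]
  constructor
  · intro h x hx i
    exact h _ ⟨x, hx, i, rfl⟩
  · rintro h z ⟨x, hx, i, rfl⟩
    exact h x hx i

theorem dvd_cb (d : ℕ) (b : Fin N → ℤ) : d ∣ cb b ↔ ∀ i, (d : ℤ) ∣ b i := by
  rw [cb, dvd_gcdL]
  simp [List.mem_ofFn]

theorem primrec_cX : Primrec (cX (N := N)) :=
  primrec_gcdL.comp (Primrec.list_flatMap Primrec.id (primrec_toList.comp Primrec.snd))

theorem primrec_cb : Primrec (cb (N := N)) := primrec_gcdL.comp primrec_toList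

def AllProp (L : List (Fin N → ℤ)) : Prop :=
  ∀ v ∈ L, ∀ w ∈ L, ∀ i ∈ List.finRange N, ∀ j ∈ List.finRange N, v i * w j = v j * w i

theorem primrec_mulEq : PrimrecPred (fun q : (ℤ × ℤ) × (ℤ × ℤ) => q.1.1 * q.1.2 = q.2.1 * q.2.2) := by
  have ha : Primrec (fun q : (ℤ × ℤ) × (ℤ × ℤ) => q.1.1) := Primrec.fst.comp Primrec.fst
  have hb : Primrec (fun q : (ℤ × ℤ) × (ℤ × ℤ) => q.1.2) := Primrec.snd.comp Primrec.fst
  have hc : Primrec (fun q : (ℤ × ℤ) × (ℤ × ℤ) => q.2.1) := Primrec.fst.comp Primrec.snd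
  have hd : Primrec (fun q : (ℤ × ℤ) × (ℤ × ℤ) => q.2.2) := Primrec.snd.comp Primrec.snd
  have M := @Primrec.nat_mul
  have A := @Primrec.nat_add
  have T := primrec_toNat
  have S := primrec_negToNat
  have key := Primrec.eq.comp
    (A.comp (A.comp (M.comp (T.comp ha) (T.comp hb)) (M.comp (S.comp ha) (S.comp hb)))
            (A.comp (M.comp (T.comp hc) (S.comp hd)) (M.comp (S.comp hc) (T.comp hd))))
    (A.comp (A.comp (M.comp (T.comp hc) (T.comp hd)) (M.comp (S.comp hc) (S.comp hd)))
            (A.comp (M.comp (T.comp ha) (S.comp hb)) (M.comp (S.comp ha) (T.comp hb))))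
  refine key.of_eq ?_
  rintro ⟨⟨a, b⟩, ⟨c, d⟩⟩
  have e : ∀ z : ℤ, z = (z.toNat : ℤ) - ((-z).toNat : ℤ) := by intro z; omega
  simp only
  conv_rhs => rw [e a, e b, e c, e d]
  zify
  constructor <;> intro h <;> linarith

theorem primrec_AllProp : PrimrecPred (AllProp (N := N)) := by
  have h0 : PrimrecRel (fun (j : Fin N) (q : Fin N × (Fin N → ℤ) × (Fin N → ℤ)) =>
      q.2.2 q.1 * q.2.1 j = q.2.2 j * q.2.1 q.1) := by
    have hj : Primrec (fun p : Fin N × (Fin N × (Fin N → ℤ) × (Fin N → ℤ)) => p.1) := Primrec.fst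
    have hi : Primrec (fun p : Fin N × (Fin N × (Fin N → ℤ) × (Fin N → ℤ)) => p.2.1) :=
      Primrec.fst.comp Primrec.snd
    have hw : Primrec (fun p : Fin N × (Fin N × (Fin N → ℤ) × (Fin N → ℤ)) => p.2.2.1) :=
      Primrec.fst.comp (Primrec.snd.comp Primrec.snd)
    have hv : Primrec (fun p : Fin N × (Fin N × (Fin N → ℤ) × (Fin N → ℤ)) => p.2.2.2) :=
      Primrec.snd.comp (Primrec.snd.comp Primrec.snd)
    exact primrec_mulEq.comp (Primrec.pair
      (Primrec.pair (Primrec.fin_app.comp hv hi) (Primrec.fin_app.comp hw hj))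
      (Primrec.pair (Primrec.fin_app.comp hv hj) (Primrec.fin_app.comp hw hi)))
  have h1 := h0.forall_mem_list
  have h2 : PrimrecRel (fun (i : Fin N) (q : (Fin N → ℤ) × (Fin N → ℤ)) =>
      ∀ j ∈ List.finRange N, q.2 i * q.1 j = q.2 j * q.1 i) :=
    h1.comp (f := fun _ : Fin N × ((Fin N → ℤ) × (Fin N → ℤ)) => List.finRange N) (Primrec.const _) Primrec.id
  have h3 := h2.forall_mem_list
  have h4 : PrimrecRel (fun (w v : Fin N → ℤ) => ∀ i ∈ List.finRange N,
      ∀ j ∈ List.finRange N, v i * w j = v j * w i) :=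
    h3.comp (f := fun _ : (Fin N → ℤ) × (Fin N → ℤ) => List.finRange N) (Primrec.const _) Primrec.id
  have h5 := h4.forall_mem_list
  have h6 : PrimrecRel (fun (v : Fin N → ℤ) (L : List (Fin N → ℤ)) => ∀ w ∈ L, ∀ i ∈ List.finRange N,
      ∀ j ∈ List.finRange N, v i * w j = v j * w i) :=
    h5.comp Primrec.snd Primrec.fst
  exact h6.forall_mem_list.comp Primrec.id Primrec.id

def Good (q : List (Fin N → ℤ) × (Fin N → ℤ)) : Prop :=
  Nat.gcd (cX q.1) (cb q.2) = 1 ∧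
    (¬ AllProp (q.2 :: q.1) ∨ ((cb q.2) % (cX q.1) = 1 % (cX q.1) ∨ (cb q.2 + 1) % (cX q.1) = 0))

theorem primrec_Good : PrimrecPred (Good (N := N)) := by
  have hX : Primrec (fun q : List (Fin N → ℤ) × (Fin N → ℤ) => cX q.1) := primrec_cX.comp Primrec.fst
  have hb : Primrec (fun q : List (Fin N → ℤ) × (Fin N → ℤ) => cb q.2) := primrec_cb.comp Primrec.snd
  refine PrimrecPred.and ?_ (PrimrecPred.or ?_ (PrimrecPred.or ?_ ?_))
  · exact Primrec.eq.comp (primrec_gcd.comp hX hb) (Primrec.const 1)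
  · exact (primrec_AllProp.comp (Primrec.list_cons.comp Primrec.snd Primrec.fst)).not
  · exact Primrec.eq.comp (Primrec.nat_mod.comp hb hX) (Primrec.nat_mod.comp (Primrec.const 1) hX)
  · exact Primrec.eq.comp (Primrec.nat_mod.comp (Primrec.succ.comp hb) hX) (Primrec.const 0)


/-- No prime divides all entries. -/
def Prim (v : Fin N → ℤ) : Prop := ∀ p : ℕ, p.Prime → ∃ i, ¬ (p : ℤ) ∣ v i

theorem span_iff_prim (v : Fin N → ℤ) :
    Submodule.span ℤ (Set.range v) = (⊤ : Submodule ℤ ℤ) ↔ Prim v := by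
  constructor
  · intro h p hp
    by_contra! hc
    have h1 : (1 : ℤ) ∈ Submodule.span ℤ (Set.range v) := by rw [h]; trivial
    have h2 : Submodule.span ℤ (Set.range v) ≤ Ideal.span {(p : ℤ)} := by
      rw [Submodule.span_le]
      rintro _ ⟨i, rfl⟩
      exact Ideal.mem_span_singleton.2 (hc i)
    have h3 := Ideal.mem_span_singleton.1 (h2 h1)
    have := Int.natCast_dvd_natCast.1 (by simpa using h3 : (p : ℤ) ∣ ((1 : ℕ) : ℤ))
    exact hp.one_lt.ne' (Nat.dvd_one.1 this)
  · intro h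
    let I : Ideal ℤ := Submodule.span ℤ (Set.range v)
    obtain ⟨g, hg⟩ : ∃ g : ℤ, I = Ideal.span {g} :=
      (IsPrincipalIdealRing.principal I).principal
    have hI : ∀ i, g ∣ v i := fun i => by
      rw [← Ideal.mem_span_singleton, ← hg]
      exact Submodule.subset_span ⟨i, rfl⟩
    change I = ⊤
    rw [hg, Ideal.span_singleton_eq_top, Int.isUnit_iff_natAbs_eq]
    by_contra hne
    obtain ⟨p, hp, hpg⟩ := Nat.exists_prime_and_dvd hne
    obtain ⟨i, hi⟩ := h p hp
    exact hi ((Int.natCast_dvd.2 hpg).trans (hI i))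

theorem Prim.bezout {v : Fin N → ℤ} (h : Prim v) : ∃ a : Fin N → ℤ, ∑ i, a i * v i = 1 := by
  have h1 : (1 : ℤ) ∈ Submodule.span ℤ (Set.range v) := by
    rw [(span_iff_prim v).2 h]; trivial
  obtain ⟨a, ha⟩ := (Submodule.mem_span_range_iff_exists_fun ℤ).1 h1
  exact ⟨a, by simpa using ha⟩

theorem dvd_conv {a b c : ℤ} (h : a ∣ b) (e : b = c) : a ∣ c := e ▸ h

theorem avoid (L : Submodule ℤ (Fin N → ℤ)) (b : Fin N → ℤ) (S : Finset ℕ)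
    (hS : ∀ p ∈ S, p.Prime)
    (hloc : ∀ p ∈ S, (∃ i, ¬ (p : ℤ) ∣ b i) ∨ ∃ l ∈ L, ∃ i, ¬ (p : ℤ) ∣ l i) :
    ∃ w ∈ L, ∀ p ∈ S, ∃ i, ¬ (p : ℤ) ∣ (w + b) i := by
  classical
  induction S using Finset.induction_on with
  | empty => exact ⟨0, L.zero_mem, by simp⟩
  | insert q S hq ih =>
    obtain ⟨w, hw, hwS⟩ := ih (fun p hp => hS p (Finset.mem_insert_of_mem hp))
      (fun p hp => hloc p (Finset.mem_insert_of_mem hp))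
    by_cases hd : ∃ i, ¬ (q : ℤ) ∣ (w + b) i
    · refine ⟨w, hw, fun p hp => ?_⟩
      rcases Finset.mem_insert.1 hp with rfl | hp
      · exact hd
      · exact hwS p hp
    · push Not at hd
      have hqp : q.Prime := hS q (Finset.mem_insert_self _ _)
      obtain ⟨l, hl, i, hi⟩ : ∃ l ∈ L, ∃ i, ¬ (q : ℤ) ∣ l i := by
        rcases hloc q (Finset.mem_insert_self _ _) with ⟨i, hi⟩ | h
        · refine ⟨w, hw, i, fun h => hi ?_⟩
          exact (dvd_add_right h).1 (hd i)
        · exact h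
      refine ⟨w + ((∏ p ∈ S, p : ℕ) : ℤ) • l, L.add_mem hw (L.smul_mem _ hl), fun p hp => ?_⟩
      rcases Finset.mem_insert.1 hp with rfl | hp
      · refine ⟨i, fun h => ?_⟩
        have h1 : (p : ℤ) ∣ ((∏ p ∈ S, p : ℕ) : ℤ) * l i := by
          have := dvd_sub h (hd i)
          simp only [Pi.add_apply, Pi.smul_apply, smul_eq_mul] at this
          refine dvd_conv this ?_
          ring
        rcases (Nat.prime_iff_prime_int.1 hqp).dvd_or_dvd h1 with h2 | h2
        · rw [Int.natCast_dvd_natCast, (Nat.prime_iff.1 hqp).dvd_finsetProd_iff] at h2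
          obtain ⟨r, hr, hpr⟩ := h2
          have := (Nat.prime_dvd_prime_iff_eq hqp (hS r (Finset.mem_insert_of_mem hr))).1 hpr
          exact hq (this ▸ hr)
        · exact hi h2
      · obtain ⟨k, hk⟩ := hwS p hp
        refine ⟨k, fun h => hk ?_⟩
        have h1 : (p : ℤ) ∣ ((∏ p ∈ S, p : ℕ) : ℤ) * l k :=
          Dvd.dvd.mul_right (Int.natCast_dvd_natCast.2 (Finset.dvd_prod_of_mem _ hp)) _
        have := dvd_sub h h1
        simp only [Pi.add_apply, Pi.smul_apply, smul_eq_mul] at this ⊢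
        refine dvd_conv this ?_
        ring

/-- Avoiding all primes dividing a nonzero integer. -/
theorem avoid' (L : Submodule ℤ (Fin N → ℤ)) (b : Fin N → ℤ) (m : ℤ) (hm : m ≠ 0)
    (hloc : ∀ p : ℕ, p.Prime → (p : ℤ) ∣ m →
      (∃ i, ¬ (p : ℤ) ∣ b i) ∨ ∃ l ∈ L, ∃ i, ¬ (p : ℤ) ∣ l i) :
    ∃ w ∈ L, ∀ p : ℕ, p.Prime → (p : ℤ) ∣ m → ∃ i, ¬ (p : ℤ) ∣ (w + b) i := by
  obtain ⟨w, hw, h⟩ := avoid L b m.natAbs.primeFactors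
    (fun p hp => Nat.prime_of_mem_primeFactors hp)
    (fun p hp => hloc p (Nat.prime_of_mem_primeFactors hp)
      (Int.natCast_dvd.2 (Nat.dvd_of_mem_primeFactors hp)))
  exact ⟨w, hw, fun p hp hpm => h p
    (Nat.mem_primeFactors.2 ⟨hp, Int.natCast_dvd.1 hpm, by simpa using hm⟩)⟩

theorem rank_two (L : Submodule ℤ (Fin N → ℤ)) (b u v : Fin N → ℤ) (hu : u ∈ L)
    (hv : v = b ∨ v ∈ L) (i j : Fin N) (hm : v i * u j - v j * u i ≠ 0)
    (hloc : ∀ p : ℕ, p.Prime → (∃ i, ¬ (p : ℤ) ∣ b i) ∨ ∃ l ∈ L, ∃ i, ¬ (p : ℤ) ∣ l i) :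
    ∃ w ∈ L, Prim (w + b) := by
  obtain ⟨k, hk⟩ : ∃ k, u k ≠ 0 := by
    by_contra! h
    simp [h] at hm
  obtain ⟨w1, hw1, hw1D, hw1p⟩ : ∃ w ∈ L, (w + b) i * u j - (w + b) j * u i ≠ 0 ∧
      ∀ p : ℕ, p.Prime → (p : ℤ) ∣ u k → ∃ i, ¬ (p : ℤ) ∣ (w + b) i := by
    obtain ⟨w, hw, hwp⟩ := avoid' L b (u k) hk (fun p hp _ => hloc p hp)
    by_cases h0 : (w + b) i * u j - (w + b) j * u i = 0
    · obtain ⟨l, hl, hlm⟩ : ∃ l ∈ L, l i * u j - l j * u i ≠ 0 := by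
        rcases hv with rfl | hv
        · refine ⟨w, hw, fun h => hm ?_⟩
          simp only [Pi.add_apply] at h0
          linarith
        · exact ⟨v, hv, hm⟩
      refine ⟨w + u k • l, L.add_mem hw (L.smul_mem _ hl), ?_, ?_⟩
      · have : (w + u k • l + b) i * u j - (w + u k • l + b) j * u i =
            u k * (l i * u j - l j * u i) := by
          simp only [Pi.add_apply, Pi.smul_apply, smul_eq_mul] at h0 ⊢
          linear_combination h0
        rw [this]
        exact mul_ne_zero hk hlm
      · intro p hp hpk
        obtain ⟨r, hr⟩ := hwp p hp hpk
        refine ⟨r, fun h => hr ?_⟩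
        have := dvd_sub h (hpk.mul_right (l r))
        simp only [Pi.add_apply, Pi.smul_apply, smul_eq_mul] at this ⊢
        refine dvd_conv this ?_
        ring
    · exact ⟨w, hw, h0, hwp⟩
  obtain ⟨w2, hw2, h2⟩ := avoid' (Submodule.span ℤ {u}) (w1 + b) _ hw1D (by
    intro p hp _
    by_cases hpk : (p : ℤ) ∣ u k
    · exact Or.inl (hw1p p hp hpk)
    · exact Or.inr ⟨u, Submodule.mem_span_singleton_self u, k, hpk⟩)
  obtain ⟨t, rfl⟩ := Submodule.mem_span_singleton.1 hw2
  refine ⟨t • u + w1, L.add_mem (L.smul_mem _ hu) hw1, fun p hp => ?_⟩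
  by_contra! hc
  rw [add_assoc] at hc
  have hD : (p : ℤ) ∣ (w1 + b) i * u j - (w1 + b) j * u i := by
    have := dvd_sub ((hc i).mul_right (u j)) ((hc j).mul_right (u i))
    simp only [Pi.add_apply, Pi.smul_apply, smul_eq_mul] at this ⊢
    refine dvd_conv this ?_
    ring
  obtain ⟨r, hr⟩ := h2 p hp hD
  exact hr (hc r)

theorem eq_smul {e y a : Fin N → ℤ} (ha : ∑ i, a i * e i = 1)
    (h : ∀ i j, e i * y j = e j * y i) : y = (∑ i, a i * y i) • e := by
  ext j
  simp only [Pi.smul_apply, smul_eq_mul]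
  calc y j = (∑ i, a i * e i) * y j := by rw [ha, one_mul]
    _ = _ := by
      rw [Finset.sum_mul, Finset.sum_mul]
      refine Finset.sum_congr rfl fun i _ => ?_
      linear_combination a i * h i j

theorem cb_smul {e a : Fin N → ℤ} (ha : ∑ i, a i * e i = 1) (t : ℤ) :
    cb (t • e) = t.natAbs := by
  apply Nat.dvd_antisymm
  · have h := (dvd_cb (cb (t • e)) (t • e)).1 dvd_rfl
    rw [← Int.natCast_dvd]
    have h3 : ∑ i, a i * (t • e) i = t := by
      symm
      simp only [Pi.smul_apply, smul_eq_mul]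
      calc t = t * ∑ i, a i * e i := by rw [ha, mul_one]
        _ = _ := by rw [Finset.mul_sum]; exact Finset.sum_congr rfl fun i _ => by ring
    exact dvd_conv (Finset.dvd_sum fun i _ => (h i).mul_left (a i)) h3
  · rw [dvd_cb]
    intro i
    exact (Int.natAbs_dvd.2 dvd_rfl).mul_right _

theorem exists_prim (y : Fin N → ℤ) (hy : y ≠ 0) : ∃ (e : Fin N → ℤ) (t : ℤ),
    Prim e ∧ t ≠ 0 ∧ y = t • e := by
  have hne : ∃ i, y i ≠ 0 := by
    by_contra! h
    exact hy (funext h)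
  obtain ⟨i, hi⟩ := hne
  obtain ⟨e, he, h1⟩ := Finset.extract_gcd y (s := Finset.univ) ⟨i, Finset.mem_univ i⟩
  refine ⟨e, Finset.univ.gcd y, ?_, ?_, ?_⟩
  · intro p hp
    by_contra! hc
    have : (p : ℤ) ∣ Finset.univ.gcd e := Finset.dvd_gcd fun i _ => hc i
    rw [h1] at this
    have := Int.natCast_dvd_natCast.1 (by simpa using this : (p : ℤ) ∣ ((1 : ℕ) : ℤ))
    exact hp.one_lt.ne' (Nat.dvd_one.1 this)
  · intro h
    have := he i (Finset.mem_univ _)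
    rw [h] at this
    exact hi (by simpa using this)
  · ext i
    simpa using he i (Finset.mem_univ _)

theorem allProp_iff (L : List (Fin N → ℤ)) :
    AllProp L ↔ ∀ v ∈ L, ∀ w ∈ L, ∀ i j, v i * w j = v j * w i := by
  simp [AllProp]

theorem main (X : List (Fin N → ℤ)) (b : Fin N → ℤ) :
    Good (X, b) ↔ ∃ w ∈ Submodule.span ℤ {v : Fin N → ℤ | v ∈ X}, Prim (w + b) := by
  set L := Submodule.span ℤ {v : Fin N → ℤ | v ∈ X} with hL
  have hXL : ∀ x ∈ X, x ∈ L := fun x hx => Submodule.subset_span hx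
  unfold Good
  simp only
  constructor
  · rintro ⟨hg, h⟩
    have hloc : ∀ p : ℕ, p.Prime → (∃ i, ¬ (p : ℤ) ∣ b i) ∨ ∃ l ∈ X, ∃ i, ¬ (p : ℤ) ∣ l i := by
      intro p hp
      by_contra! hc
      have := Nat.dvd_gcd ((dvd_cX p X).2 hc.2) ((dvd_cb p b).2 hc.1)
      rw [hg] at this
      exact hp.one_lt.ne' (Nat.dvd_one.1 this)
    by_cases hP : AllProp (b :: X)
    · replace h := h.resolve_left (not_not.2 hP)
      rw [allProp_iff] at hP
      obtain ⟨y, hy, hy0⟩ : ∃ y ∈ b :: X, y ≠ 0 := by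
        rcases hloc 2 Nat.prime_two with ⟨i, hi⟩ | ⟨l, hl, i, hi⟩
        · exact ⟨b, by simp, fun h => hi (by simp [h])⟩
        · exact ⟨l, by simp [hl], fun h => hi (by simp [h])⟩
      obtain ⟨e, t, he, ht, rfl⟩ := exists_prim y hy0
      obtain ⟨a, ha⟩ := he.bezout
      have hall : ∀ y ∈ b :: X, y = (∑ i, a i * y i) • e := by
        intro y' hy'
        apply eq_smul ha
        intro i j
        have := hP _ hy _ hy' i j
        simp only [Pi.smul_apply, smul_eq_mul, mul_assoc] at this
        exact mul_left_cancel₀ ht this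
      -- `cX • e ∈ L`
      have hcX : ((cX X : ℕ) : ℤ) • e ∈ L := by
        let φ : (Fin N → ℤ) →ₗ[ℤ] ℤ := Fintype.linearCombination ℤ a
        let ψ : ℤ →ₗ[ℤ] (Fin N → ℤ) := LinearMap.toSpanSingleton ℤ _ e
        obtain ⟨d, hd⟩ : ∃ d : ℤ, (L.comap ψ : Ideal ℤ) = Ideal.span {d} :=
          (IsPrincipalIdealRing.principal (L.comap ψ : Ideal ℤ)).principal
        have hmem : ∀ s : ℤ, s • e ∈ L ↔ d ∣ s := by
          intro s
          rw [← Ideal.mem_span_singleton, ← hd]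
          exact Iff.rfl
        rw [hmem, ← Int.natAbs_dvd, Int.natCast_dvd_natCast, dvd_cX]
        intro x hx i
        have h1 := hall x (by simp [hx])
        have h2 : d ∣ ∑ i, a i * x i := by
          rw [← hmem, ← h1]
          exact hXL x hx
        rw [h1, Int.natAbs_dvd]
        exact h2.mul_right _
      have hb := hall b (by simp)
      set β := ∑ i, a i * b i with hβ
      have hcb : cb b = β.natAbs := by rw [hb]; exact cb_smul ha β
      have hdvd : ((cX X : ℕ) : ℤ) ∣ 1 - β ∨ ((cX X : ℕ) : ℤ) ∣ -1 - β := by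
        have h' : ((cX X : ℕ) : ℤ) ∣ (cb b : ℤ) - 1 ∨ ((cX X : ℕ) : ℤ) ∣ (cb b : ℤ) + 1 := by
          rcases h with h | h
          · left
            exact (Nat.modEq_iff_dvd.1 (Eq.symm h : 1 ≡ cb b [MOD cX X]))
          · right
            exact_mod_cast Nat.dvd_of_mod_eq_zero h
        rw [hcb] at h'
        rcases Int.natAbs_eq β with e1 | e1 <;> rcases h' with h' | h'
        · left; rw [e1]; rw [← dvd_neg]; exact dvd_conv h' (by ring)
        · right; rw [e1]; rw [← dvd_neg]; exact dvd_conv h' (by ring)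
        · right; rw [e1]; exact dvd_conv h' (by ring)
        · left; rw [e1]; exact dvd_conv h' (by ring)
      rcases hdvd with ⟨q, hq⟩ | ⟨q, hq⟩
      · refine ⟨q • ((cX X : ℕ) : ℤ) • e, L.smul_mem _ hcX, ?_⟩
        have : q • ((cX X : ℕ) : ℤ) • e + b = e := by
          rw [hb, smul_smul, ← add_smul]
          rw [show q * ((cX X : ℕ) : ℤ) + β = 1 by linear_combination -hq, one_smul]
        rw [this]; exact he
      · refine ⟨q • ((cX X : ℕ) : ℤ) • e, L.smul_mem _ hcX, ?_⟩
        have : q • ((cX X : ℕ) : ℤ) • e + b = -e := by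
          rw [hb, smul_smul, ← add_smul]
          rw [show q * ((cX X : ℕ) : ℤ) + β = -1 by linear_combination -hq, neg_smul, one_smul]
        rw [this]
        intro p hp
        obtain ⟨i, hi⟩ := he p hp
        exact ⟨i, by simpa using hi⟩
    · rw [allProp_iff] at hP
      push Not at hP
      obtain ⟨v, hv, u, hu, i, j, hne⟩ := hP
      have hloc' : ∀ p : ℕ, p.Prime →
          (∃ i, ¬ (p : ℤ) ∣ b i) ∨ ∃ l ∈ L, ∃ i, ¬ (p : ℤ) ∣ l i := by
        intro p hp
        rcases hloc p hp with h | ⟨l, hl, h⟩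
        · exact Or.inl h
        · exact Or.inr ⟨l, hXL l hl, h⟩
      rcases List.mem_cons.1 hu with rfl | hu
      · rcases List.mem_cons.1 hv with rfl | hv
        · exact absurd (mul_comm _ _) hne
        · exact rank_two L u v u (hXL v hv) (Or.inl rfl) i j
            (fun h => hne (by linarith)) hloc'
      · refine rank_two L b u v (hXL u hu) ?_ i j (fun h => hne (by linarith)) hloc'
        rcases List.mem_cons.1 hv with rfl | hv
        · exact Or.inl rfl
        · exact Or.inr (hXL v hv)
  · rintro ⟨w, hw, hp⟩
    have hdw : ∀ d : ℕ, d ∣ cX X → ∀ i, (d : ℤ) ∣ w i := by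
      intro d hd
      rw [dvd_cX] at hd
      clear hp
      induction hw using Submodule.span_induction with
      | mem x hx => exact hd x hx
      | zero => simp
      | add x y _ _ hx hy => exact fun i => dvd_add (hx i) (hy i)
      | smul r x _ hx => exact fun i => (hx i).mul_left r
    constructor
    · by_contra hne
      obtain ⟨p, hpp, hpd⟩ := Nat.exists_prime_and_dvd hne
      obtain ⟨i, hi⟩ := hp p hpp
      exact hi (dvd_add (hdw p (hpd.trans (Nat.gcd_dvd_left _ _)) i)
        ((dvd_cb p b).1 (hpd.trans (Nat.gcd_dvd_right _ _)) i))
    · rw [or_iff_not_imp_left, not_not, allProp_iff]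
      intro hP
      obtain ⟨a, ha⟩ := hp.bezout
      have hwb : ∀ i j, w i * b j = w j * b i := by
        clear ha hdw hp
        induction hw using Submodule.span_induction with
        | mem x hx => exact hP x (by simp [show x ∈ X from hx]) b (by simp)
        | zero => simp
        | add x y _ _ hx hy =>
          intro i j
          simp only [Pi.add_apply]
          linear_combination hx i j + hy i j
        | smul r x _ hx =>
          intro i j
          simp only [Pi.smul_apply, smul_eq_mul]
          linear_combination r * hx i j
      have hb : b = (∑ i, a i * b i) • (w + b) := by
        apply eq_smul ha
        intro i j
        simp only [Pi.add_apply]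
        linear_combination hwb i j
      set β := ∑ i, a i * b i with hβ
      have hcb : cb b = β.natAbs := by
        conv_lhs => rw [hb]
        exact cb_smul ha β
      have hd : ((cX X : ℕ) : ℤ) ∣ 1 - β := by
        have : 1 - β = ∑ i, a i * w i := by
          rw [← ha, hβ, ← Finset.sum_sub_distrib]
          refine Finset.sum_congr rfl fun i _ => ?_
          simp only [Pi.add_apply]; ring
        rw [this]
        exact Finset.dvd_sum fun i _ => (hdw _ dvd_rfl i).mul_left _
      rw [hcb]
      rcases Int.natAbs_eq β with e1 | e1
      · left
        refine Nat.modEq_iff_dvd.2 ?_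
        rw [← e1]
        exact_mod_cast hd
      · right
        apply Nat.mod_eq_zero_of_dvd
        rw [← Int.natCast_dvd_natCast]
        push_cast
        rw [e1] at hd
        exact dvd_conv hd (by push_cast; simp; try ring)

end Stmt11

theorem stmt_11 (N : ℕ) :
    ∃ f : List (Fin N → ℤ) × (Fin N → ℤ) → Bool, Computable f ∧
      ∀ (X : List (Fin N → ℤ)) (b : Fin N → ℤ),
        f (X, b) = true ↔
          ∃ w ∈ Submodule.span ℤ {v : Fin N → ℤ | v ∈ X},
            Submodule.span ℤ (Set.range (w + b)) = (⊤ : Submodule ℤ ℤ) := by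
  obtain ⟨hdec, h⟩ := Stmt11.primrec_Good (N := N)
  refine ⟨_, h.to_comp, fun X b => ?_⟩
  rw [decide_eq_true_iff, Stmt11.main]
  simp only [Stmt11.span_iff_prim]
end

section
/- There exists an algorithm (a computable Bool-valued function with respect to a standard encoding of the inputs) that, given integer matrices A₁ ∈ M_{n₁×m₁}(ℤ) and A₂ ∈ M_{n₂×m₂}(ℤ), an (n₂ × n₁)-integer matrix inducing a ℤ-module homomorphism κ : M(A₁) → M(A₂), and d ∈ ℕ, decides whether there exists a surjective ℤ-module homomorphism ψ : M(A₁) → ℤ^d for which there is a ℤ-module homomorphism ψ̃ : M(A₂) → ℤ^d with ψ̃ ∘ κ = ψ. -/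
/-- A standard encoding of an integer matrix as its list of rows. -/
def encodeMatrix {n m : ℕ} (A : Fin n → Fin m → ℤ) : List (List ℤ) :=
  List.ofFn fun i => List.ofFn (A i)


namespace S14

theorem primrec_int_toNat : Primrec Int.toNat := by
  have h : Primrec (fun z : ℤ => if Encodable.encode z % 2 = 0 then Encodable.encode z / 2 else 0) :=
    Primrec.ite (Primrec.eq.comp (Primrec.nat_mod.comp Primrec.encode (Primrec.const 2))
      (Primrec.const 0)) (Primrec.nat_div.comp Primrec.encode (Primrec.const 2)) (Primrec.const 0)
  refine h.of_eq ?_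
  rintro (n | n)
  · have : Encodable.encode (Int.ofNat n) = 2 * n := rfl
    rw [this]; simp
  · have : Encodable.encode (Int.negSucc n) = 2 * n + 1 := rfl
    rw [this]
    have : (2 * n + 1) % 2 = 1 := by omega
    simp [this]

theorem primrec_int_sub_nat : Primrec₂ (fun a b : ℕ => (a : ℤ) - b) := by
  have h : Primrec₂ (fun a b : ℕ => if b ≤ a then 2 * (a - b) else 2 * (b - a - 1) + 1) := by
    refine Primrec.ite (Primrec.nat_le.comp Primrec.snd Primrec.fst) ?_ ?_
    · exact Primrec.nat_mul.comp (Primrec.const 2) (Primrec.nat_sub.comp Primrec.fst Primrec.snd)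
    · exact Primrec.nat_add.comp (Primrec.nat_mul.comp (Primrec.const 2)
        (Primrec.nat_sub.comp (Primrec.nat_sub.comp Primrec.snd Primrec.fst) (Primrec.const 1)))
        (Primrec.const 1)
  refine Primrec.encode_iff.1 (Primrec.of_eq h ?_)
  rintro ⟨a, b⟩
  simp only
  split_ifs with hb
  · obtain ⟨c, rfl⟩ := Nat.exists_eq_add_of_le hb
    have : ((b + c : ℕ) : ℤ) - b = Int.ofNat c := by simp
    rw [this, Nat.add_sub_cancel_left]; rfl
  · obtain ⟨c, rfl⟩ := Nat.exists_eq_add_of_lt (not_le.1 hb)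
    have : (a : ℤ) - (a + c + 1 : ℕ) = Int.negSucc c := by
      rw [Int.negSucc_eq]; push_cast; ring
    rw [this]
    have : a + c + 1 - a - 1 = c := by omega
    rw [this]; rfl

theorem primrec_int_neg : Primrec (fun z : ℤ => -z) := by
  have h : Primrec (fun z : ℤ => if Encodable.encode z = 0 then (0:ℤ) else
      if Encodable.encode z % 2 = 0 then ((0:ℕ):ℤ) - (Encodable.encode z / 2 : ℕ)
      else ((Encodable.encode z / 2 + 1 : ℕ) : ℤ) - (0:ℕ)) := by
    refine Primrec.ite (Primrec.eq.comp Primrec.encode (Primrec.const 0)) (Primrec.const 0)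
      (Primrec.ite (Primrec.eq.comp (Primrec.nat_mod.comp Primrec.encode (Primrec.const 2))
      (Primrec.const 0)) ?_ ?_)
    · exact primrec_int_sub_nat.comp (Primrec.const 0)
        (Primrec.nat_div.comp Primrec.encode (Primrec.const 2))
    · exact primrec_int_sub_nat.comp (Primrec.succ.comp
        (Primrec.nat_div.comp Primrec.encode (Primrec.const 2))) (Primrec.const 0)
  refine h.of_eq ?_
  rintro (n | n)
  · have : Encodable.encode (Int.ofNat n) = 2 * n := rfl
    rw [this]
    by_cases hn : n = 0 <;> simp [hn]
  · have : Encodable.encode (Int.negSucc n) = 2 * n + 1 := rfl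
    rw [this]
    have h1 : (2 * n + 1) % 2 = 1 := by omega
    have h2 : (2 * n + 1) / 2 = n := by omega
    simp [h1, h2, Int.negSucc_eq]

theorem int_dec (z : ℤ) : z = (z.toNat : ℤ) - ((-z).toNat : ℤ) := by omega

theorem primrec_int_add : Primrec₂ (fun a b : ℤ => a + b) := by
  have p := primrec_int_toNat
  have q := primrec_int_toNat.comp primrec_int_neg
  have h : Primrec₂ (fun a b : ℤ =>
      ((a.toNat + b.toNat : ℕ) : ℤ) - (((-a).toNat + (-b).toNat : ℕ) : ℤ)) :=
    primrec_int_sub_nat.comp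
      (Primrec.nat_add.comp (p.comp Primrec.fst) (p.comp Primrec.snd))
      (Primrec.nat_add.comp (q.comp Primrec.fst) (q.comp Primrec.snd))
  refine Primrec.of_eq h ?_
  rintro ⟨a, b⟩
  simp only
  omega

theorem primrec_int_mul : Primrec₂ (fun a b : ℤ => a * b) := by
  have p := primrec_int_toNat
  have q := primrec_int_toNat.comp primrec_int_neg
  have h : Primrec₂ (fun a b : ℤ =>
      ((a.toNat * b.toNat + (-a).toNat * (-b).toNat : ℕ) : ℤ)
        - ((a.toNat * (-b).toNat + (-a).toNat * b.toNat : ℕ) : ℤ)) :=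
    primrec_int_sub_nat.comp
      (Primrec.nat_add.comp
        (Primrec.nat_mul.comp (p.comp Primrec.fst) (p.comp Primrec.snd))
        (Primrec.nat_mul.comp (q.comp Primrec.fst) (q.comp Primrec.snd)))
      (Primrec.nat_add.comp
        (Primrec.nat_mul.comp (p.comp Primrec.fst) (q.comp Primrec.snd))
        (Primrec.nat_mul.comp (q.comp Primrec.fst) (p.comp Primrec.snd)))
  refine Primrec.of_eq h ?_
  rintro ⟨a, b⟩
  simp only
  conv_rhs => rw [int_dec a, int_dec b]
  push_cast
  ring

theorem primrec_sum {α : Type*} [Primcodable α] {f : α → ℕ} {g : α → ℕ → ℤ}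
    (hf : Primrec f) (hg : Primrec₂ g) :
    Primrec (fun a => ∑ k ∈ Finset.range (f a), g a k) := by
  have h : Primrec (fun a => Nat.rec (motive := fun _ => ℤ) (0:ℤ)
      (fun k s => s + g a k) (f a)) := by
    refine Primrec.nat_rec' (h := fun a (p : ℕ × ℤ) => p.2 + g a p.1) hf (Primrec.const 0) ?_
    exact primrec_int_add.comp (Primrec.snd.comp Primrec.snd)
      (hg.comp Primrec.fst (Primrec.fst.comp Primrec.snd))
  refine h.of_eq ?_
  intro a
  induction f a with
  | zero => simp
  | succ n ih => rw [Finset.sum_range_succ, ← ih]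

theorem primrec_forall {α : Type} [Primcodable α] {f : α → ℕ} {P : α → ℕ → Prop}
    (hf : Primrec f) (hP : PrimrecRel P) :
    PrimrecPred (fun a => ∀ k < f a, P a k) := by
  have : PrimrecRel (fun (k : ℕ) (a : α) => P a k) := hP.comp Primrec.snd Primrec.fst
  have h : PrimrecRel (fun (n : ℕ) (a : α) => ∀ k < n, P a k) :=
    (this.forall_mem_list.comp (Primrec.list_range.comp Primrec.fst) Primrec.snd).of_eq (by simp)
  exact h.comp hf Primrec.id

abbrev LL := List (List ℤ)
abbrev Inp := (ℕ × ℕ × ℕ × ℕ) × (LL × LL × LL × ℕ)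
abbrev Cert := (ℤ × ℤ) × (LL × LL × LL × LL)

/-- entry of a matrix given as a list of rows -/
def ent (L : LL) (i j : ℕ) : ℤ := (L.getD i []).getD j 0

theorem primrec_ent {α : Type*} [Primcodable α] {L : α → LL} {i j : α → ℕ}
    (hL : Primrec L) (hi : Primrec i) (hj : Primrec j) :
    Primrec (fun a => ent (L a) (i a) (j a)) :=
  (Primrec.list_getD (0:ℤ)).comp ((Primrec.list_getD ([] : List ℤ)).comp hL hi) hj

def posChk (n₁ n₂ m₂ d : ℕ) (A B C D : LL) : Prop :=
  (∀ i < d, ∀ j < m₂, ∑ k ∈ Finset.range n₂, ent C i k * ent A k j = 0) ∧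
  (∀ i < d, ∀ j < d, ∑ l ∈ Finset.range n₁,
    (∑ k ∈ Finset.range n₂, ent C i k * ent B k l) * ent D l j = if i = j then 1 else 0)

def negChk (n₁ n₂ m₂ d : ℕ) (A B : LL) (t p : ℤ) (X Y Z W : LL) : Prop :=
  d ≠ 0 ∧ t ≠ 0 ∧ p ≠ 1 ∧ p ≠ -1 ∧
  ∀ i < n₂, ∀ j < n₁, t * ent B i j =
    t * (∑ k ∈ Finset.range (d - 1), ent X i k * ent Y k j) + t * p * ent Z i j
    + ∑ k ∈ Finset.range m₂, ent A i k * ent W k j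

def posP (x : Inp × Cert) : Prop :=
  posChk x.1.1.1 x.1.1.2.2.1 x.1.1.2.2.2 x.1.2.2.2.2 x.1.2.2.1 x.1.2.2.2.1 x.2.2.1 x.2.2.2.1

def negP (x : Inp × Cert) : Prop :=
  negChk x.1.1.1 x.1.1.2.2.1 x.1.1.2.2.2 x.1.2.2.2.2 x.1.2.2.1 x.1.2.2.2.1 x.2.1.1 x.2.1.2
    x.2.2.1 x.2.2.2.1 x.2.2.2.2.1 x.2.2.2.2.2

open Primrec in
theorem primrec_posP : PrimrecPred posP := by
  have hx1 : Primrec (fun x : Inp × Cert => x.1) := fst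
  have hx2 : Primrec (fun x : Inp × Cert => x.2) := snd
  have hn₁ : Primrec (fun x : Inp × Cert => x.1.1.1) := fst.comp (fst.comp hx1)
  have hn₂ : Primrec (fun x : Inp × Cert => x.1.1.2.2.1) :=
    fst.comp (snd.comp (snd.comp (fst.comp hx1)))
  have hm₂ : Primrec (fun x : Inp × Cert => x.1.1.2.2.2) :=
    snd.comp (snd.comp (snd.comp (fst.comp hx1)))
  have hd : Primrec (fun x : Inp × Cert => x.1.2.2.2.2) :=
    snd.comp (snd.comp (snd.comp (snd.comp hx1)))
  have hA : Primrec (fun x : Inp × Cert => x.1.2.2.1) :=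
    fst.comp (snd.comp (snd.comp hx1))
  have hB : Primrec (fun x : Inp × Cert => x.1.2.2.2.1) :=
    fst.comp (snd.comp (snd.comp (snd.comp hx1)))
  have hX : Primrec (fun x : Inp × Cert => x.2.2.1) := fst.comp (snd.comp hx2)
  have hY : Primrec (fun x : Inp × Cert => x.2.2.2.1) := fst.comp (snd.comp (snd.comp hx2))
  refine PrimrecPred.and ?_ ?_
  · refine primrec_forall hd (primrec_forall (hm₂.comp fst) ?_)
    refine Primrec.eq.comp (primrec_sum (hn₂.comp (fst.comp fst)) ?_) (Primrec.const (0:ℤ))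
    exact primrec_int_mul.comp
      (primrec_ent (hX.comp (fst.comp (fst.comp fst))) (snd.comp (fst.comp fst)) snd)
      (primrec_ent (hA.comp (fst.comp (fst.comp fst))) snd (snd.comp fst))
  · refine primrec_forall hd (primrec_forall (hd.comp fst) ?_)
    refine Primrec.eq.comp (primrec_sum (hn₁.comp (fst.comp fst)) ?_)
      (Primrec.ite (Primrec.eq.comp (snd.comp fst) snd) (Primrec.const (1:ℤ)) (Primrec.const (0:ℤ)))
    refine primrec_int_mul.comp ?_
      (primrec_ent (hY.comp (fst.comp (fst.comp fst))) snd (snd.comp fst))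
    refine primrec_sum (hn₂.comp (fst.comp (fst.comp fst))) ?_
    exact primrec_int_mul.comp
      (primrec_ent (hX.comp (fst.comp (fst.comp (fst.comp fst))))
        (snd.comp (fst.comp (fst.comp fst))) snd)
      (primrec_ent (hB.comp (fst.comp (fst.comp (fst.comp fst)))) snd (snd.comp fst))

open Primrec in
theorem primrec_negP : PrimrecPred negP := by
  have hx1 : Primrec (fun x : Inp × Cert => x.1) := fst
  have hx2 : Primrec (fun x : Inp × Cert => x.2) := snd
  have hn₁ : Primrec (fun x : Inp × Cert => x.1.1.1) := fst.comp (fst.comp hx1)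
  have hn₂ : Primrec (fun x : Inp × Cert => x.1.1.2.2.1) :=
    fst.comp (snd.comp (snd.comp (fst.comp hx1)))
  have hm₂ : Primrec (fun x : Inp × Cert => x.1.1.2.2.2) :=
    snd.comp (snd.comp (snd.comp (fst.comp hx1)))
  have hd : Primrec (fun x : Inp × Cert => x.1.2.2.2.2) :=
    snd.comp (snd.comp (snd.comp (snd.comp hx1)))
  have hA : Primrec (fun x : Inp × Cert => x.1.2.2.1) :=
    fst.comp (snd.comp (snd.comp hx1))
  have hB : Primrec (fun x : Inp × Cert => x.1.2.2.2.1) :=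
    fst.comp (snd.comp (snd.comp (snd.comp hx1)))
  have ht : Primrec (fun x : Inp × Cert => x.2.1.1) := fst.comp (fst.comp hx2)
  have hp : Primrec (fun x : Inp × Cert => x.2.1.2) := snd.comp (fst.comp hx2)
  have hX : Primrec (fun x : Inp × Cert => x.2.2.1) := fst.comp (snd.comp hx2)
  have hY : Primrec (fun x : Inp × Cert => x.2.2.2.1) := fst.comp (snd.comp (snd.comp hx2))
  have hZ : Primrec (fun x : Inp × Cert => x.2.2.2.2.1) :=
    fst.comp (snd.comp (snd.comp (snd.comp hx2)))
  have hW : Primrec (fun x : Inp × Cert => x.2.2.2.2.2) :=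
    snd.comp (snd.comp (snd.comp (snd.comp hx2)))
  refine PrimrecPred.and (PrimrecPred.not (Primrec.eq.comp hd (Primrec.const 0)))
    (PrimrecPred.and (PrimrecPred.not (Primrec.eq.comp ht (Primrec.const 0)))
    (PrimrecPred.and (PrimrecPred.not (Primrec.eq.comp hp (Primrec.const 1)))
    (PrimrecPred.and (PrimrecPred.not (Primrec.eq.comp hp (Primrec.const (-1)))) ?_)))
  refine primrec_forall hn₂ (primrec_forall (hn₁.comp fst) ?_)
  have f2 : Primrec (fun x : ((Inp × Cert) × ℕ) × ℕ => x.1.1) := fst.comp fst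
  have i2 : Primrec (fun x : ((Inp × Cert) × ℕ) × ℕ => x.1.2) := snd.comp fst
  have f3 : Primrec (fun x : (((Inp × Cert) × ℕ) × ℕ) × ℕ => x.1.1.1) := f2.comp fst
  have i3 : Primrec (fun x : (((Inp × Cert) × ℕ) × ℕ) × ℕ => x.1.1.2) := i2.comp fst
  have j3 : Primrec (fun x : (((Inp × Cert) × ℕ) × ℕ) × ℕ => x.1.2) := snd.comp fst
  refine Primrec.eq.comp (primrec_int_mul.comp (ht.comp f2) (primrec_ent (hB.comp f2) i2 snd)) ?_
  refine primrec_int_add.comp (primrec_int_add.comp (primrec_int_mul.comp (ht.comp f2) ?_) ?_) ?_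
  · refine primrec_sum (Primrec.nat_sub.comp (hd.comp f2) (Primrec.const 1)) ?_
    exact primrec_int_mul.comp (primrec_ent (hX.comp f3) i3 snd) (primrec_ent (hY.comp f3) snd j3)
  · exact primrec_int_mul.comp (primrec_int_mul.comp (ht.comp f2) (hp.comp f2))
      (primrec_ent (hZ.comp f2) i2 snd)
  · refine primrec_sum (hm₂.comp f2) ?_
    exact primrec_int_mul.comp (primrec_ent (hA.comp f3) i3 snd) (primrec_ent (hW.comp f3) snd j3)

/-- Two complementary semidecidable conditions with primitive recursive certificates. -/
theorem exists_decider (hex : ∀ a : Inp, ∃ c : Cert, posP (a, c) ∨ negP (a, c)) :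
    ∃ f : Inp → Bool, Computable f ∧
      ∀ a, (f a = true → ∃ c, posP (a, c)) ∧ (f a = false → ∃ c, negP (a, c)) := by
  classical
  let s : Inp → ℕ → Option Bool := fun a n => (Encodable.decode (α := Cert) n).bind fun c =>
    if posP (a, c) then some true else if negP (a, c) then some false else none
  have hs : Primrec₂ s := by
    refine Primrec.option_bind (Primrec.decode.comp Primrec.snd) ?_
    have hg : Primrec (fun x : (Inp × ℕ) × Cert => (x.1.1, x.2)) :=
      Primrec.pair (Primrec.fst.comp Primrec.fst) Primrec.snd
    exact Primrec.ite (primrec_posP.comp hg) (Primrec.const (some true))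
      (Primrec.ite (primrec_negP.comp hg) (Primrec.const (some false)) (Primrec.const none))
  have hp : Partrec fun a => Nat.rfindOpt (s a) := Partrec.rfindOpt hs.to_comp
  have hdom : ∀ a, (Nat.rfindOpt (s a)).Dom := by
    intro a
    rw [Nat.rfindOpt_dom]
    obtain ⟨c, hc⟩ := hex a
    refine ⟨Encodable.encode c, ?_⟩
    simp only [s, Encodable.encodek, Option.bind_some]
    by_cases h1 : posP (a, c)
    · exact ⟨true, by simp [h1]⟩
    · exact ⟨false, by simp [h1, hc.resolve_left h1]⟩
  refine ⟨fun a => (Nat.rfindOpt (s a)).get (hdom a), ?_, ?_⟩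
  · exact hp.of_eq fun a => by simp
  · intro a
    obtain ⟨n, hn⟩ := Nat.rfindOpt_spec (Part.get_mem (hdom a))
    simp only [s, Option.mem_def, Option.bind_eq_some_iff] at hn
    obtain ⟨c, -, hc⟩ := hn
    split_ifs at hc with h1 h2
    · have := Option.some.inj hc
      exact ⟨fun _ => ⟨c, h1⟩, fun h => absurd (this.trans h) (by simp)⟩
    · have := Option.some.inj hc
      exact ⟨fun h => absurd (this.trans h) (by simp), fun _ => ⟨c, h2⟩⟩

end S14

namespace S14

theorem exists_min {R F : Type*} [CommRing R] [IsDomain R] [IsPrincipalIdealRing R]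
    [AddCommGroup F] [Module R F] (N : Submodule R F) :
    ∃ φ : F →ₗ[R] R, ∃ y ∈ N, ∀ ψ : F →ₗ[R] R, ∀ z ∈ N, φ y ∣ ψ z := by
  obtain ⟨I, ⟨φ, rfl⟩, hmax⟩ := set_has_maximal_iff_noetherian.2
    (inferInstance : IsNoetherian R R) (Set.range fun φ : F →ₗ[R] R => N.map φ) ⟨_, ⟨0, rfl⟩⟩
  have hmax' : ∀ χ : F →ₗ[R] R, ¬ N.map φ < N.map χ := fun χ => hmax _ ⟨χ, rfl⟩
  obtain ⟨y, hy, hya⟩ := Submodule.mem_map.1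
    (Submodule.IsPrincipal.generator_mem (N.map φ))
  have hspan : N.map φ = Ideal.span {φ y} := by
    rw [hya]; exact (Ideal.span_singleton_generator (N.map φ)).symm
  have key : ∀ χ : F →ₗ[R] R, φ y ∈ N.map χ → ∀ z ∈ N, φ y ∣ χ z := by
    intro χ h z hz
    have hle : N.map φ ≤ N.map χ := by
      rw [hspan]; exact (Ideal.span_singleton_le_iff_mem _).2 h
    have heq : N.map φ = N.map χ := by
      by_contra hne
      exact hmax' χ (lt_of_le_of_ne hle hne)
    have : χ z ∈ N.map φ := heq ▸ Submodule.mem_map_of_mem hz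
    rw [hspan] at this
    exact Ideal.mem_span_singleton.1 this
  have hφ : ∀ z ∈ N, φ y ∣ φ z := key φ (Submodule.mem_map_of_mem hy)
  refine ⟨φ, y, hy, fun ψ z hz => ?_⟩
  -- first `φ y ∣ ψ y`
  have h1 : φ y ∣ ψ y := by
    let J := Ideal.span {φ y, ψ y}
    let g := Submodule.IsPrincipal.generator J
    have hg : g ∈ J := Submodule.IsPrincipal.generator_mem J
    obtain ⟨r, s, hrs⟩ := Ideal.mem_span_pair.1 hg
    have hd : ∀ x ∈ J, g ∣ x := fun x hx => (Submodule.IsPrincipal.mem_iff_generator_dvd J).1 hx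
    have hgφ : g ∣ φ y := hd _ (Ideal.subset_span (by simp))
    have hgψ : g ∣ ψ y := hd _ (Ideal.subset_span (by simp))
    have hχ : (r • φ + s • ψ) y = g := by simpa using hrs
    have : φ y ∣ (r • φ + s • ψ) y := by
      refine key _ ?_ y hy
      obtain ⟨q, hq⟩ := hgφ
      rw [hq, ← hχ, mul_comm, ← smul_eq_mul]
      exact Submodule.smul_mem _ _ (Submodule.mem_map_of_mem hy)
    rw [hχ] at this
    exact this.trans hgψ
  obtain ⟨e, he⟩ := h1
  obtain ⟨f, hf⟩ := hφ z hz
  have h2 : φ y ∣ (φ + (ψ - e • φ)) (z - f • y) := by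
    refine key _ ?_ _ (N.sub_mem hz (N.smul_mem _ hy))
    have : φ y = (φ + (ψ - e • φ)) y := by simp [he]; ring
    rw [this]
    exact Submodule.mem_map_of_mem hy
  have h3 : (φ + (ψ - e • φ)) (z - f • y) = ψ z - φ y * (e * f) := by
    simp [he, hf]; ring
  rw [h3] at h2
  exact (dvd_sub_left (Dvd.intro _ rfl)).1 h2

theorem key {R : Type*} [CommRing R] [IsDomain R] [IsPrincipalIdealRing R] (d : ℕ) :
    ∀ (F : Type*) [AddCommGroup F] [Module R F] [Module.Free R F] [Module.Finite R F]
      (N : Submodule R F),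
    (∃ ψ : F →ₗ[R] (Fin d → R), ∀ v, ∃ x ∈ N, ψ x = v) ∨
    (d ≠ 0 ∧ ∃ p : R, ¬ IsUnit p ∧ ∃ s : Fin (d - 1) → F, ∀ x ∈ N, ∃ c : Fin (d - 1) → R, ∃ z : F,
      x = ∑ i, c i • s i + p • z) := by
  induction d with
  | zero =>
    intro F _ _ _ _ N
    exact Or.inl ⟨0, fun v => ⟨0, N.zero_mem, Subsingleton.elim _ _⟩⟩
  | succ d ih =>
    intro F _ _ _ _ N
    obtain ⟨φ, y, hy, hdiv⟩ := exists_min N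
    by_cases hu : IsUnit (φ y)
    · obtain ⟨u, hu⟩ := hu
      let φ₁ : F →ₗ[R] R := (↑u⁻¹ : R) • φ
      have hφ₁ : φ₁ y = 1 := by simp [φ₁, ← hu]
      let K := LinearMap.ker φ₁
      let π : F →ₗ[R] K := LinearMap.codRestrict K (LinearMap.id - φ₁.smulRight y) (by
        intro x; simp [K, hφ₁])
      have hπ : ∀ x, (π x : F) = x - φ₁ x • y := fun x => rfl
      rcases ih K (N.comap K.subtype) with ⟨ψ, hψ⟩ | ⟨hd, p, hp, s, hs⟩
      · left
        refine ⟨LinearMap.pi (Fin.cons φ₁ fun i => (LinearMap.proj i).comp (ψ.comp π)), ?_⟩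
        intro v
        obtain ⟨x, hx, hxv⟩ := hψ (Fin.tail v)
        have hx0 : φ₁ (x : F) = 0 := x.2
        refine ⟨v 0 • y + x, N.add_mem (N.smul_mem _ hy) hx, ?_⟩
        have h1 : φ₁ (v 0 • y + x) = v 0 := by simp [hφ₁, hx0]
        have h2 : π (v 0 • y + x) = x := by
          apply Subtype.ext
          rw [hπ, h1]; simp
        funext i
        refine Fin.cases ?_ (fun j => ?_) i
        · simpa using h1
        · simp only [LinearMap.pi_apply, Fin.cons_succ, LinearMap.comp_apply, h2, hxv]
          rfl
      · right
        obtain ⟨d, rfl⟩ := Nat.exists_eq_succ_of_ne_zero hd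
        refine ⟨by simp, p, hp, (Fin.cons y fun i => (s i : F) : Fin (d + 1) → F), fun x hx => ?_⟩
        have hm : π x ∈ N.comap K.subtype := by
          change (π x : F) ∈ N
          rw [hπ]
          exact N.sub_mem hx (N.smul_mem _ hy)
        obtain ⟨c, z, hc⟩ := hs _ hm
        refine ⟨(Fin.cons (φ₁ x) c : Fin (d + 1) → R), z, ?_⟩
        have hc' := congrArg (fun k : K => (k : F)) hc
        simp only [hπ, Submodule.coe_add, Submodule.coe_smul, Submodule.coe_sum] at hc'
        have : x = φ₁ x • y + (x - φ₁ x • y) := by abel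
        have hsum : ∑ i : Fin (d + 1), (Fin.cons (φ₁ x) c : Fin (d + 1) → R) i •
            (Fin.cons y fun i => (s i : F) : Fin (d + 1) → F) i
            = φ₁ x • y + ∑ i : Fin d, c i • (s i : F) := by
          rw [Fin.sum_univ_succ]; simp
        refine this.trans ?_
        rw [hc', ← add_assoc]
        exact congrArg (· + p • (z : F)) hsum.symm
    · right
      refine ⟨by simp, φ y, hu, 0, fun x hx => ?_⟩
      let b := Module.Free.chooseBasis R F
      have : ∀ i, ∃ q, b.coord i x = φ y * q := fun i => hdiv (b.coord i) x hx
      choose q hq using this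
      refine ⟨0, ∑ i, q i • b i, ?_⟩
      simp only [Pi.zero_apply, smul_zero, Finset.sum_const_zero, zero_add, Finset.smul_sum,
        smul_smul, ← hq]
      simpa using (b.sum_repr x).symm

def Pos {n₁ n₂ m₂ : ℕ} (d : ℕ) (A : Matrix (Fin n₂) (Fin m₂) ℤ) (B : Matrix (Fin n₂) (Fin n₁) ℤ) :
    Prop :=
  ∃ (C : Matrix (Fin d) (Fin n₂) ℤ) (D : Matrix (Fin n₁) (Fin d) ℤ), C * A = 0 ∧ C * B * D = 1

def Neg {n₁ n₂ m₂ : ℕ} (d : ℕ) (A : Matrix (Fin n₂) (Fin m₂) ℤ) (B : Matrix (Fin n₂) (Fin n₁) ℤ) :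
    Prop :=
  d ≠ 0 ∧ ∃ (t p : ℤ) (X : Matrix (Fin n₂) (Fin (d - 1)) ℤ) (Y : Matrix (Fin (d - 1)) (Fin n₁) ℤ)
    (Z : Matrix (Fin n₂) (Fin n₁) ℤ) (W : Matrix (Fin m₂) (Fin n₁) ℤ), t ≠ 0 ∧ p ≠ 1 ∧ p ≠ -1 ∧
    t • B = t • (X * Y) + (t * p) • Z + A * W

theorem not_pos_neg {n₁ n₂ m₂ d : ℕ} {A : Matrix (Fin n₂) (Fin m₂) ℤ}
    {B : Matrix (Fin n₂) (Fin n₁) ℤ} (hP : Pos d A B) (hN : Neg d A B) : False := by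
  obtain ⟨C, D, hCA, hCBD⟩ := hP
  obtain ⟨hd, t, p, X, Y, Z, W, ht, hp1, hp2, h⟩ := hN
  have h1 : t • (C * B) = t • (C * X * Y + p • (C * Z)) := by
    have := congrArg (fun M => C * M) h
    simp only [Matrix.mul_add, Matrix.mul_smul, ← Matrix.mul_assoc, hCA, Matrix.zero_mul,
      add_zero] at this
    rw [this, smul_add, smul_smul]
  have h2 : C * B = C * X * Y + p • (C * Z) := by
    ext i j
    have := congrFun (congrFun h1 i) j
    simp only [Matrix.smul_apply, smul_eq_mul] at this
    exact mul_left_cancel₀ ht this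
  have h3 : (1 : Matrix (Fin d) (Fin d) ℤ) = (C * X) * (Y * D) + p • (C * Z * D) := by
    rw [← hCBD, h2, Matrix.add_mul, Matrix.smul_mul, Matrix.mul_assoc (C * X)]
  have hp : p.natAbs ≠ 1 := by omega
  have : Nontrivial (ZMod p.natAbs) := ZMod.nontrivial_iff.2 hp
  let r := Int.castRingHom (ZMod p.natAbs)
  have hpz : (p : ZMod p.natAbs) = 0 := by
    rw [ZMod.intCast_zmod_eq_zero_iff_dvd]; simp
  have h4 : (1 : Matrix (Fin d) (Fin d) (ZMod p.natAbs)) = (C * X).map r * (Y * D).map r := by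
    rw [← Matrix.map_mul]
    have h5 := congrArg (fun M : Matrix (Fin d) (Fin d) ℤ => M.map r) h3
    rw [Matrix.map_one _ (map_zero r) (map_one r)] at h5
    rw [h5]
    ext i j
    simp only [Matrix.map_apply, Matrix.add_apply, Matrix.smul_apply, smul_eq_mul, map_add, map_mul]
    simp [r, hpz]
  have h6 : Function.Surjective (Matrix.toLin' ((C * X).map r)) := by
    intro v
    refine ⟨((Y * D).map r).mulVec v, ?_⟩
    rw [Matrix.toLin'_apply, Matrix.mulVec_mulVec, ← h4, Matrix.one_mulVec]
  have h7 := card_le_of_surjective (ZMod p.natAbs) _ h6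
  simp at h7
  omega

theorem pos_or_neg {n₁ n₂ m₂ d : ℕ} (A : Matrix (Fin n₂) (Fin m₂) ℤ)
    (B : Matrix (Fin n₂) (Fin n₁) ℤ) : Pos d A B ∨ Neg d A B := by
  let L := LinearMap.range (Matrix.toLin' A)
  let M := (Fin n₂ → ℤ) ⧸ L
  let T := Submodule.torsion ℤ M
  let q : (Fin n₂ → ℤ) →ₗ[ℤ] M ⧸ T := T.mkQ.comp L.mkQ
  have hq : Function.Surjective q := T.mkQ_surjective.comp L.mkQ_surjective
  have : Module.Free ℤ (M ⧸ T) := inferInstance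
  have hqA : ∀ w, q (A.mulVec w) = 0 := by
    intro w
    have : L.mkQ (A.mulVec w) = 0 := by
      rw [Submodule.mkQ_apply, Submodule.Quotient.mk_eq_zero]
      exact ⟨w, Matrix.toLin'_apply A w⟩
    simp [q, this]
  have hq0 : ∀ x, q x = 0 → ∃ t : ℤ, t ≠ 0 ∧ ∃ w, t • x = A.mulVec w := by
    intro x hx
    have : L.mkQ x ∈ T := (Submodule.Quotient.mk_eq_zero T).1 hx
    obtain ⟨t, ht⟩ := (Submodule.mem_torsion_iff _).1 this
    refine ⟨t, nonZeroDivisors.coe_ne_zero t, ?_⟩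
    have h2 : L.mkQ ((t : ℤ) • x) = 0 := by rw [map_smul]; exact ht
    rw [Submodule.mkQ_apply, Submodule.Quotient.mk_eq_zero] at h2
    obtain ⟨w, hw⟩ := h2
    exact ⟨w, by rw [← hw, Matrix.toLin'_apply]⟩
  rcases key d (M ⧸ T) (LinearMap.range (q.comp (Matrix.toLin' B))) with ⟨ψ, hψ⟩ | ⟨hd, p, hp, s, hs⟩
  · left
    let C := LinearMap.toMatrix' (ψ.comp q)
    have hC : ∀ x, C.mulVec x = ψ (q x) := by
      intro x
      rw [← Matrix.toLin'_apply, Matrix.toLin'_toMatrix']; rfl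
    have hsurj : Function.Surjective (C * B).mulVec := by
      intro v
      obtain ⟨_, ⟨x, rfl⟩, hx⟩ := hψ v
      refine ⟨x, ?_⟩
      rw [← Matrix.mulVec_mulVec, hC, ← hx]; simp
    obtain ⟨D, hD⟩ := Matrix.mulVec_surjective_iff_exists_right_inverse.1 hsurj
    refine ⟨C, D, ?_, hD⟩
    apply Matrix.toLin'.injective
    ext1 j
    ext1
    simp only [LinearMap.comp_apply, Matrix.toLin'_apply, ← Matrix.mulVec_mulVec, hC, hqA]
    simp only [map_zero, Matrix.zero_mulVec]
  · right
    have h1 : ∀ j : Fin n₁, ∃ c : Fin (d - 1) → ℤ, ∃ z : M ⧸ T,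
        q (B.col j) = ∑ i, c i • s i + p • z := by
      intro j
      apply hs
      exact ⟨Pi.single j 1, by simp⟩
    choose c z hcz using h1
    choose X hX using fun i => hq (s i)
    choose Z hZ using fun j => hq (z j)
    have h2 : ∀ j, ∃ t : ℤ, t ≠ 0 ∧ ∃ w, t • (B.col j - ∑ i, c j i • X i - p • Z j) = A.mulVec w := by
      intro j
      apply hq0
      simp only [map_sub, map_sum, map_smul, hX, hZ, hcz]
      abel
    choose t ht w hw using h2
    have hdvd : ∀ j, ∃ u, ∏ j, t j = u * t j := fun j => by
      obtain ⟨u, hu⟩ := Finset.dvd_prod_of_mem t (Finset.mem_univ j)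
      exact ⟨u, by rw [hu, mul_comm]⟩
    choose u hu using hdvd
    refine ⟨hd, ∏ j, t j, p, Matrix.of fun a i => X i a,
      Matrix.of fun i j => c j i, Matrix.of fun a j => Z j a,
      Matrix.of fun k j => u j * w j k, Finset.prod_ne_zero_iff.2 fun j _ => ht j, ?_, ?_, ?_⟩
    · rintro rfl; exact hp isUnit_one
    · rintro rfl; exact hp (by simp)
    · ext a j
      have h3 := congrFun (hw j) a
      simp only [Pi.smul_apply, Pi.sub_apply, Finset.sum_apply, smul_eq_mul, Matrix.col_apply,
        Matrix.mulVec, dotProduct] at h3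
      simp only [Matrix.smul_apply, Matrix.add_apply, Matrix.mul_apply, smul_eq_mul, Matrix.of_apply]
      have h4 : ∑ k, A a k * (u j * w j k) = u j * ∑ k, A a k * w j k := by
        rw [Finset.mul_sum]; exact Finset.sum_congr rfl fun k _ => by ring
      have h5 : ∑ i, X i a * c j i = ∑ i, c j i * X i a :=
        Finset.sum_congr rfl fun k _ => mul_comm _ _
      rw [h4, ← h3, h5, hu j]
      ring

theorem pos_iff {n₁ m₁ n₂ m₂ : ℕ} (A₁ : Matrix (Fin n₁) (Fin m₁) ℤ) (A₂ : Matrix (Fin n₂) (Fin m₂) ℤ)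
    (B : Matrix (Fin n₂) (Fin n₁) ℤ) (d : ℕ)
    (hB : LinearMap.range (Matrix.toLin' A₁) ≤
      Submodule.comap (Matrix.toLin' B) (LinearMap.range (Matrix.toLin' A₂))) :
    Pos d A₂ B ↔
      ∃ ψ : ((Fin n₁ → ℤ) ⧸ LinearMap.range (Matrix.toLin' A₁)) →ₗ[ℤ] (Fin d → ℤ),
        Function.Surjective ψ ∧
        ∃ ψ' : ((Fin n₂ → ℤ) ⧸ LinearMap.range (Matrix.toLin' A₂)) →ₗ[ℤ] (Fin d → ℤ),
          ψ'.comp (Submodule.mapQ _ _ (Matrix.toLin' B) hB) = ψ := by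
  constructor
  · rintro ⟨C, D, hCA, hCBD⟩
    have hle : LinearMap.range (Matrix.toLin' A₂) ≤ LinearMap.ker (Matrix.toLin' C) := by
      rintro _ ⟨x, rfl⟩
      rw [LinearMap.mem_ker, Matrix.toLin'_apply, Matrix.toLin'_apply, Matrix.mulVec_mulVec, hCA,
        Matrix.zero_mulVec]
    refine ⟨_, ?_, Submodule.liftQ _ (Matrix.toLin' C) hle, rfl⟩
    intro v
    refine ⟨Submodule.Quotient.mk (D.mulVec v), ?_⟩
    rw [LinearMap.comp_apply, Submodule.mapQ_apply, Submodule.liftQ_apply, Matrix.toLin'_apply,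
      Matrix.toLin'_apply, Matrix.mulVec_mulVec, Matrix.mulVec_mulVec, hCBD,
      Matrix.one_mulVec]
  · rintro ⟨ψ, hψ, ψ', rfl⟩
    let C := LinearMap.toMatrix' (ψ'.comp (Submodule.mkQ _))
    have hC : ∀ x, C.mulVec x = ψ' (Submodule.Quotient.mk x) := by
      intro x
      rw [← Matrix.toLin'_apply, Matrix.toLin'_toMatrix']; rfl
    have hsurj : Function.Surjective (C * B).mulVec := by
      intro v
      obtain ⟨x, hx⟩ := hψ v
      obtain ⟨x, rfl⟩ := Submodule.Quotient.mk_surjective _ x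
      refine ⟨x, ?_⟩
      rw [← Matrix.mulVec_mulVec, hC, ← hx, LinearMap.comp_apply, Submodule.mapQ_apply,
        Matrix.toLin'_apply]
    obtain ⟨D, hD⟩ := Matrix.mulVec_surjective_iff_exists_right_inverse.1 hsurj
    refine ⟨C, D, ?_, hD⟩
    apply Matrix.toLin'.injective
    ext1 j
    ext1
    have : ∀ w, (Submodule.Quotient.mk (A₂.mulVec w) :
        (Fin n₂ → ℤ) ⧸ LinearMap.range (Matrix.toLin' A₂)) = 0 := fun w =>
      (Submodule.Quotient.mk_eq_zero _).2 ⟨w, Matrix.toLin'_apply A₂ w⟩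
    simp only [LinearMap.comp_apply, Matrix.toLin'_apply, ← Matrix.mulVec_mulVec, hC, this]
    simp only [map_zero, Matrix.zero_mulVec]

end S14

namespace S14

/-- the matrix given by a list of rows -/
def mat (n m : ℕ) (L : LL) : Matrix (Fin n) (Fin m) ℤ := Matrix.of fun i j => ent L i j

theorem mat_encode {n m : ℕ} (A : Fin n → Fin m → ℤ) :
    mat n m (encodeMatrix A) = Matrix.of A := by
  ext i j
  simp [mat, ent, encodeMatrix, List.getD_eq_getElem?_getD]

theorem posChk_iff (n₁ n₂ m₂ d : ℕ) (A B C D : LL) :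
    posChk n₁ n₂ m₂ d A B C D ↔ mat d n₂ C * mat n₂ m₂ A = 0 ∧
      mat d n₂ C * mat n₂ n₁ B * mat n₁ d D = 1 := by
  simp only [posChk, ← Matrix.ext_iff, Matrix.mul_apply, mat, Matrix.of_apply, Matrix.zero_apply,
    Matrix.one_apply, Finset.sum_range, Fin.forall_iff, Fin.mk.injEq]

theorem negChk_iff (n₁ n₂ m₂ d : ℕ) (A B : LL) (t p : ℤ) (X Y Z W : LL) :
    negChk n₁ n₂ m₂ d A B t p X Y Z W ↔ d ≠ 0 ∧ t ≠ 0 ∧ p ≠ 1 ∧ p ≠ -1 ∧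
      t • mat n₂ n₁ B = t • (mat n₂ (d - 1) X * mat (d - 1) n₁ Y) + (t * p) • mat n₂ n₁ Z
        + mat n₂ m₂ A * mat m₂ n₁ W := by
  simp only [negChk, ← Matrix.ext_iff, Matrix.mul_apply, mat, Matrix.of_apply, Matrix.add_apply,
    Matrix.smul_apply, smul_eq_mul, Finset.sum_range, Fin.forall_iff]

theorem exists_mat {n m : ℕ} (M : Matrix (Fin n) (Fin m) ℤ) : ∃ L : LL, mat n m L = M :=
  ⟨encodeMatrix M, mat_encode M⟩

theorem exists_cert (a : Inp) : ∃ c : Cert, posP (a, c) ∨ negP (a, c) := by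
  obtain ⟨⟨n₁, m₁, n₂, m₂⟩, A₁, A₂, B, d⟩ := a
  rcases pos_or_neg (d := d) (mat n₂ m₂ A₂) (mat n₂ n₁ B) with
    ⟨C, D, h⟩ | ⟨hd, t, p, X, Y, Z, W, h⟩
  · obtain ⟨C, rfl⟩ := exists_mat C
    obtain ⟨D, rfl⟩ := exists_mat D
    exact ⟨((0, 0), (C, D, [], [])), Or.inl ((posChk_iff _ _ _ _ _ _ _ _).2 h)⟩
  · obtain ⟨X, rfl⟩ := exists_mat X
    obtain ⟨Y, rfl⟩ := exists_mat Y
    obtain ⟨Z, rfl⟩ := exists_mat Z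
    obtain ⟨W, rfl⟩ := exists_mat W
    exact ⟨((t, p), (X, Y, Z, W)), Or.inr ((negChk_iff _ _ _ _ _ _ _ _ _ _ _ _).2 ⟨hd, h⟩)⟩

end S14

/-- There is an algorithm (a computable `Bool`-valued function with respect to a
standard encoding of the inputs) that, given integer matrices `A₁ ∈ M_{n₁×m₁}(ℤ)`,
`A₂ ∈ M_{n₂×m₂}(ℤ)`, an `(n₂ × n₁)`-integer matrix `B` inducing a `ℤ`-module
homomorphism `κ : M(A₁) → M(A₂)` between the presented modules
`M(Aᵢ) := ℤ^{nᵢ}/{Aᵢ·x}`, and `d ∈ ℕ`, decides whether there exists a surjective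
`ℤ`-module homomorphism `ψ : M(A₁) → ℤ^d` for which there is a `ℤ`-module
homomorphism `ψ̃ : M(A₂) → ℤ^d` with `ψ̃ ∘ κ = ψ`. -/
theorem stmt_14 :
    ∃ f : (ℕ × ℕ × ℕ × ℕ) × (List (List ℤ) × List (List ℤ) × List (List ℤ) × ℕ) → Bool,
      Computable f ∧
      ∀ (n₁ m₁ n₂ m₂ : ℕ) (A₁ : Fin n₁ → Fin m₁ → ℤ) (A₂ : Fin n₂ → Fin m₂ → ℤ)
        (B : Fin n₂ → Fin n₁ → ℤ) (d : ℕ)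
        (hB : LinearMap.range (Matrix.toLin' (Matrix.of A₁)) ≤
          Submodule.comap (Matrix.toLin' (Matrix.of B))
            (LinearMap.range (Matrix.toLin' (Matrix.of A₂)))),
        (f ((n₁, m₁, n₂, m₂), (encodeMatrix A₁, encodeMatrix A₂, encodeMatrix B, d))
            = true ↔
          ∃ ψ : ((Fin n₁ → ℤ) ⧸ LinearMap.range (Matrix.toLin' (Matrix.of A₁)))
              →ₗ[ℤ] (Fin d → ℤ),
            Function.Surjective ψ ∧
            ∃ ψ' : ((Fin n₂ → ℤ) ⧸ LinearMap.range (Matrix.toLin' (Matrix.of A₂)))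
                →ₗ[ℤ] (Fin d → ℤ),
              ψ'.comp (Submodule.mapQ _ _ (Matrix.toLin' (Matrix.of B)) hB) = ψ) := by
  obtain ⟨f, hf, hspec⟩ := S14.exists_decider S14.exists_cert
  refine ⟨f, hf, ?_⟩
  intro n₁ m₁ n₂ m₂ A₁ A₂ B d hB
  rw [← S14.pos_iff (Matrix.of A₁) (Matrix.of A₂) (Matrix.of B) d hB,
    ← S14.mat_encode A₂, ← S14.mat_encode B]
  obtain ⟨h1, h2⟩ := hspec ((n₁, m₁, n₂, m₂), (encodeMatrix A₁, encodeMatrix A₂, encodeMatrix B, d))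
  constructor
  · intro h
    obtain ⟨c, hc⟩ := h1 h
    exact ⟨_, _, (S14.posChk_iff _ _ _ _ _ _ _ _).1 hc⟩
  · intro hpos
    by_contra hne
    obtain ⟨c, hc⟩ := h2 (by simpa using hne)
    obtain ⟨hd, h⟩ := (S14.negChk_iff _ _ _ _ _ _ _ _ _ _ _ _).1 hc
    exact S14.not_pos_neg hpos ⟨hd, _, _, _, _, _, _, h⟩
end
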